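/- Let γ ∈ (0,1/2). There exists a constant C = C(γ) < ∞ such that the following holds. For all real numbers S, s₀ with 0 < S ≤ s₀/3, set a := 2S/s₀ ∈ (0,1), define φ : (0, ∞) → ℝ by φ(s) = f_a(2s/s₀), and note that for s ∈ (S, s₀/2) the second derivative of φ is φ''(s) = 2/(s₀ · s · log(1/a)) > 0. Then ∫_{S}^{s₀/2} s^{2γ} · (φ''(s))^{1+γ} · (φ(s))^{−γ} ds ≤ C / ( s₀ · (log s₀ − log S)^γ ). -/

import Mathlib

open MeasureTheory

/-- The flux function `f_a`, defined for `a ∈ (0,1)` by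
`f_a(σ) = (1/log(1/a)) * (σ*(log σ - log a) - (σ - a))`. -/
noncomputable def fluxFn (a : ℝ) : ℝ → ℝ :=
  fun σ => (1 / Real.log (1 / a)) * (σ * (Real.log σ - Real.log a) - (σ - a))

lemma aux_h (u : ℝ) (hu : 0 < u) : u ^ 2 / (4 * (1 + u)) ≤ u - 1 + Real.exp (-u) := by
  rw [div_le_iff₀ (by positivity)]
  rcases le_total u 2 with h | h
  · have h1 : 1 - u / 2 ≤ Real.exp (-u / 2) := by
      have := Real.add_one_le_exp (-u / 2)
      linarith
    have h2 : Real.exp (-u) = Real.exp (-u / 2) ^ 2 := by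
      rw [← Real.exp_nat_mul]; congr 1; push_cast; ring
    have h3 : (1 - u / 2) ^ 2 ≤ Real.exp (-u) := by
      rw [h2]; exact pow_le_pow_left₀ (by linarith) h1 2
    have h4 : u ^ 2 / 4 ≤ u - 1 + Real.exp (-u) := by nlinarith
    nlinarith [mul_le_mul_of_nonneg_right h4 (show (0:ℝ) ≤ 4 * (1 + u) by linarith),
      pow_pos hu 3]
  · have := Real.exp_pos (-u)
    nlinarith [mul_pos this hu]

lemma aux_h2 (u L : ℝ) (hu : 0 < u) (huL : u ≤ L) (hL : 1 / 3 ≤ L) :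
    u ^ 2 / (16 * L) ≤ u - 1 + Real.exp (-u) := by
  refine le_trans ?_ (aux_h u hu)
  apply div_le_div_of_nonneg_left (by positivity) (by positivity)
  linarith

lemma aux_flux (a σ : ℝ) (ha : 0 < a) (hσ : 0 < σ) :
    fluxFn a σ = (σ / Real.log (1 / a)) *
      (Real.log (σ / a) - 1 + Real.exp (-Real.log (σ / a))) := by
  rw [Real.exp_neg, Real.exp_log (by positivity), Real.log_div hσ.ne' ha.ne']
  unfold fluxFn
  field_simp
  ring

lemma aux_deriv (a s₀ s : ℝ) (h0 : 0 < s₀) (hs : 0 < s) :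
    deriv (deriv (fun τ : ℝ => fluxFn a (2 * τ / s₀))) s
      = 2 / (s₀ * s * Real.log (1 / a)) := by
  have h1 : ∀ t : ℝ, 0 < t → HasDerivAt (fun τ : ℝ => fluxFn a (2 * τ / s₀))
      ((1 / Real.log (1 / a)) * (2 / s₀) * (Real.log (2 * t / s₀) - Real.log a)) t := by
    intro t ht
    have hl : HasDerivAt (fun τ : ℝ => 2 * τ / s₀) (2 / s₀) t := by
      simpa using ((hasDerivAt_id t).const_mul 2).div_const s₀
    have hne : 2 * t / s₀ ≠ 0 := by positivity
    have hlog := hl.log hne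
    have := (((hl.mul (hlog.sub_const (Real.log a))).sub (hl.sub_const a)).const_mul
      (1 / Real.log (1 / a)))
    unfold fluxFn
    refine this.congr_deriv ?_
    rw [mul_assoc]
    congr 1
    field_simp
    ring
  have h2 : deriv (fun τ : ℝ => fluxFn a (2 * τ / s₀)) =ᶠ[nhds s]
      fun t => (1 / Real.log (1 / a)) * (2 / s₀) * (Real.log (2 * t / s₀) - Real.log a) := by
    filter_upwards [lt_mem_nhds hs] with t ht
    exact (h1 t ht).deriv
  rw [h2.deriv_eq]
  have hl : HasDerivAt (fun τ : ℝ => 2 * τ / s₀) (2 / s₀) s := by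
    simpa using ((hasDerivAt_id s).const_mul 2).div_const s₀
  have hne : 2 * s / s₀ ≠ 0 := by positivity
  have := ((hl.log hne).sub_const (Real.log a)).const_mul ((1 / Real.log (1 / a)) * (2 / s₀))
  rw [this.deriv]
  field_simp

lemma aux_int (γ S b : ℝ) (hγ : 0 < γ) (hγ2 : γ < 1 / 2) (hS : 0 < S) (hb : S ≤ b) :
    IntegrableOn (fun s => (1 / s) * Real.log (s / S) ^ (-(2 * γ))) (Set.Ioo S b) ∧
    ∫ s in Set.Ioo S b, (1 / s) * Real.log (s / S) ^ (-(2 * γ))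
      = Real.log (b / S) ^ (1 - 2 * γ) / (1 - 2 * γ) := by
  have hp : 0 < 1 - 2 * γ := by linarith
  have hc : ContinuousOn (fun s => Real.log (s / S) ^ (1 - 2 * γ) / (1 - 2 * γ))
      (Set.Icc S b) := by
    apply ContinuousOn.div_const
    apply ContinuousOn.rpow_const
    · apply ContinuousOn.log
      · fun_prop
      · intro x hx
        have : 0 < x := lt_of_lt_of_le hS hx.1
        positivity
    · intro x hx
      right; exact hp.le
  have hlogpos : ∀ x ∈ Set.Ioo S b, 0 < Real.log (x / S) := by
    intro x hx
    apply Real.log_pos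
    rw [lt_div_iff₀ hS]; linarith [hx.1]
  have hd : ∀ x ∈ Set.Ioo S b, HasDerivAt
      (fun s => Real.log (s / S) ^ (1 - 2 * γ) / (1 - 2 * γ))
      ((1 / x) * Real.log (x / S) ^ (-(2 * γ))) x := by
    intro x hx
    have hx0 : 0 < x := lt_trans hS hx.1
    have hl : HasDerivAt (fun s => Real.log (s / S)) ((1 / S) / (x / S)) x :=
      ((hasDerivAt_id x).div_const S).log (by simp; exact ⟨hx0.ne', hS.ne'⟩)
    have := (hl.rpow_const (p := 1 - 2 * γ) (Or.inl (hlogpos x hx).ne')).div_const (1 - 2 * γ)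
    refine this.congr_deriv ?_
    rw [show 1 - 2 * γ - 1 = -(2 * γ) by ring]
    field_simp
  have hI := intervalIntegral.integrableOn_deriv_of_nonneg hc hd (by
    intro x hx
    have hx0 : 0 < x := lt_trans hS hx.1
    have := hlogpos x hx
    positivity)
  refine ⟨hI.mono_set Set.Ioo_subset_Ioc_self, ?_⟩
  rw [← integral_Ioc_eq_integral_Ioo, ← intervalIntegral.integral_of_le hb,
    intervalIntegral.integral_eq_sub_of_hasDerivAt_of_le hb hc hd
      ((intervalIntegrable_iff_integrableOn_Ioc_of_le hb).2 hI)]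
  rw [div_self hS.ne', Real.log_one, Real.zero_rpow hp.ne']
  simp

lemma aux_pt (γ s X h u L : ℝ) (hγ : 0 < γ) (hs : 0 < s) (hX : 0 < X) (hu : 0 < u) (hL : 0 < L)
    (hh : u ^ 2 / (16 * L) ≤ h) :
    s ^ (2 * γ) * X ^ (1 + γ) * (s ^ 2 * X * h) ^ (-γ)
      ≤ X * (16 * L) ^ γ * u ^ (-(2 * γ)) := by
  have hh0 : 0 < h := lt_of_lt_of_le (by positivity) hh
  have e1 : s ^ (2 * γ) * X ^ (1 + γ) * (s ^ 2 * X * h) ^ (-γ) = X * h ^ (-γ) := by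
    rw [Real.mul_rpow (by positivity) hh0.le, Real.mul_rpow (by positivity) hX.le,
      ← Real.rpow_natCast s 2, ← Real.rpow_mul hs.le, Real.rpow_add hX, Real.rpow_one,
      Real.rpow_neg hX.le]
    rw [show ((2:ℕ):ℝ) * -γ = -(2 * γ) by push_cast; ring, Real.rpow_neg hs.le]
    have := (Real.rpow_pos_of_pos hs (2 * γ)).ne'
    have := (Real.rpow_pos_of_pos hX γ).ne'
    field_simp
  have e2 : (16 * L) ^ γ * u ^ (-(2 * γ)) = (u ^ 2 / (16 * L)) ^ (-γ) := by
    rw [Real.div_rpow (by positivity) (by positivity), ← Real.rpow_natCast u 2,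
      ← Real.rpow_mul hu.le, Real.rpow_neg (show 0 ≤ 16 * L by positivity) γ,
      show ((2:ℕ):ℝ) * -γ = -(2 * γ) by push_cast; ring]
    field_simp
  rw [e1, mul_assoc, e2]
  apply mul_le_mul_of_nonneg_left _ hX.le
  exact Real.rpow_le_rpow_of_nonpos (by positivity) hh (by linarith)

theorem stmt_9 (γ : ℝ) (hγ : γ ∈ Set.Ioo (0 : ℝ) (1 / 2)) :
    ∃ C : ℝ, ∀ S s₀ : ℝ, 0 < S → S ≤ s₀ / 3 →
      -- with `a := 2*S/s₀ ∈ (0,1)` and `φ(s) := f_a (2*s/s₀)`, on `(S, s₀/2)` the second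
      -- derivative of `φ` is `φ''(s) = 2/(s₀ * s * log(1/a)) > 0`, and the weighted
      -- integral of `s^(2γ) * φ''(s)^(1+γ) * φ(s)^(-γ)` is controlled:
      2 * S / s₀ ∈ Set.Ioo (0 : ℝ) 1 ∧
      (∀ s ∈ Set.Ioo S (s₀ / 2),
        deriv (deriv (fun τ : ℝ => fluxFn (2 * S / s₀) (2 * τ / s₀))) s
            = 2 / (s₀ * s * Real.log (1 / (2 * S / s₀))) ∧
        0 < 2 / (s₀ * s * Real.log (1 / (2 * S / s₀)))) ∧
      ∫ s in Set.Ioo S (s₀ / 2),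
          s ^ (2 * γ) * (2 / (s₀ * s * Real.log (1 / (2 * S / s₀)))) ^ (1 + γ)
            * fluxFn (2 * S / s₀) (2 * s / s₀) ^ (-γ)
        ≤ C / (s₀ * (Real.log s₀ - Real.log S) ^ γ) := by
  obtain ⟨hγ0, hγ2⟩ := hγ
  refine ⟨2 * (16 : ℝ) ^ γ * 3 ^ γ / (1 - 2 * γ), ?_⟩
  intro S s₀ hS hSs
  have h0 : 0 < s₀ := by linarith
  have ha : 0 < 2 * S / s₀ := by positivity
  have ha1 : 2 * S / s₀ ≤ 2 / 3 := by
    rw [div_le_iff₀ h0]; linarith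
  have hinv : 1 / (2 * S / s₀) = s₀ / 2 / S := by field_simp
  have h32 : (3 / 2 : ℝ) ≤ 1 / (2 * S / s₀) := by
    rw [le_div_iff₀ ha]; linarith
  have hlogL : Real.log (3 / 2) ≤ Real.log (1 / (2 * S / s₀)) :=
    Real.log_le_log (by norm_num) h32
  have hl3 : (1 / 3 : ℝ) ≤ Real.log (3 / 2) := by
    have := Real.one_sub_inv_le_log_of_pos (show (0 : ℝ) < 3 / 2 by norm_num)
    norm_num at this ⊢
    linarith
  have hlog2 : Real.log 2 ≤ 2 * Real.log (3 / 2) := by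
    have h : Real.log ((3 / 2 : ℝ) ^ 2) = 2 * Real.log (3 / 2) := by
      rw [Real.log_pow]; norm_num
    rw [← h]
    exact Real.log_le_log (by norm_num) (by norm_num)
  have hD : Real.log s₀ - Real.log S = Real.log (1 / (2 * S / s₀)) + Real.log 2 := by
    rw [hinv, Real.log_div (by positivity) hS.ne', Real.log_div h0.ne' (by norm_num)]
    ring
  set L := Real.log (1 / (2 * S / s₀)) with hLdef
  have hL3 : 1 / 3 ≤ L := by linarith
  have hL : 0 < L := by linarith
  refine ⟨⟨ha, by linarith⟩, ?_, ?_⟩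
  · intro s hs
    have hs0 : 0 < s := lt_trans hS hs.1
    exact ⟨aux_deriv _ s₀ s h0 hs0, by positivity⟩
  have hb : S ≤ s₀ / 2 := by linarith
  obtain ⟨hI, hE⟩ := aux_int γ S (s₀ / 2) hγ0 hγ2 hS hb
  have hpt : ∀ s ∈ Set.Ioo S (s₀ / 2),
      0 ≤ s ^ (2 * γ) * (2 / (s₀ * s * L)) ^ (1 + γ)
            * fluxFn (2 * S / s₀) (2 * s / s₀) ^ (-γ) ∧
      s ^ (2 * γ) * (2 / (s₀ * s * L)) ^ (1 + γ)
            * fluxFn (2 * S / s₀) (2 * s / s₀) ^ (-γ)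
      ≤ (2 / (s₀ * L) * (16 * L) ^ γ) * ((1 / s) * Real.log (s / S) ^ (-(2 * γ))) := by
    intro s hs
    have hs0 : 0 < s := lt_trans hS hs.1
    have hu : 0 < Real.log (s / S) := by
      apply Real.log_pos
      rw [lt_div_iff₀ hS]; linarith [hs.1]
    have huL : Real.log (s / S) ≤ L := by
      rw [hLdef, hinv]
      apply Real.log_le_log (by positivity)
      exact div_le_div_of_nonneg_right hs.2.le hS.le
    have hh := aux_h2 _ L hu huL hL3
    have hflux : fluxFn (2 * S / s₀) (2 * s / s₀) = s ^ 2 * (2 / (s₀ * s * L)) *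
        (Real.log (s / S) - 1 + Real.exp (-Real.log (s / S))) := by
      rw [aux_flux _ _ ha (by positivity), ← hLdef,
        show 2 * s / s₀ / (2 * S / s₀) = s / S by field_simp]
      congr 1
      field_simp
    rw [hflux]
    have hh0 : 0 < Real.log (s / S) - 1 + Real.exp (-Real.log (s / S)) :=
      lt_of_lt_of_le (by positivity) hh
    constructor
    · have := Real.rpow_nonneg (show 0 ≤ s ^ 2 * (2 / (s₀ * s * L)) *
        (Real.log (s / S) - 1 + Real.exp (-Real.log (s / S))) by positivity) (-γ)
      positivity
    · refine (aux_pt γ s (2 / (s₀ * s * L)) _ _ L hγ0 hs0 (by positivity) hu hL hh).trans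
        (le_of_eq ?_)
      field_simp
  calc _ ≤ ∫ s in Set.Ioo S (s₀ / 2),
        (2 / (s₀ * L) * (16 * L) ^ γ) * ((1 / s) * Real.log (s / S) ^ (-(2 * γ))) := by
        apply integral_mono_of_nonneg
        · filter_upwards [ae_restrict_mem measurableSet_Ioo] with s hs using (hpt s hs).1
        · exact hI.const_mul _
        · filter_upwards [ae_restrict_mem measurableSet_Ioo] with s hs using (hpt s hs).2
    _ = (2 * 16 ^ γ / (1 - 2 * γ)) / (s₀ * L ^ γ) := by
        rw [integral_const_mul, hE, ← hinv, ← hLdef, Real.mul_rpow (by norm_num) hL.le,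
          show 1 - 2 * γ = 1 - γ - γ by ring, Real.rpow_sub hL, Real.rpow_sub hL, Real.rpow_one]
        have := (Real.rpow_pos_of_pos hL γ).ne'
        have : 1 - γ - γ ≠ 0 := by linarith
        field_simp
    _ ≤ _ := by
        rw [hD]
        have hpos : 0 < L + Real.log 2 := by
          have := Real.log_pos (show (1 : ℝ) < 2 by norm_num)
          linarith
        have hle : (L + Real.log 2) ^ γ ≤ 3 ^ γ * L ^ γ := by
          rw [← Real.mul_rpow (by norm_num) hL.le]
          exact Real.rpow_le_rpow hpos.le (by linarith) hγ0.le
        have hp : 0 < 1 - 2 * γ := by linarith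
        have hK : 0 < 2 * (16 : ℝ) ^ γ / (1 - 2 * γ) := by positivity
        rw [div_le_div_iff₀ (by positivity) (by positivity)]
        calc _ ≤ 2 * (16 : ℝ) ^ γ / (1 - 2 * γ) * (s₀ * (3 ^ γ * L ^ γ)) := by gcongr
          _ = _ := by ring
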